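/- arXiv:2210.05971 — 6 statements merged into one kernel-verified Lean document; each statement's English description precedes it below -/
import Mathlib

section
/- Let P = (P₁,…,Pₙ) be a positive regular polynomial n-tuple, n ≥ 2. Then the P-triangle Δⁿ_P is a nonempty, open, connected and bounded subset of ℂⁿ, and it is 𝕋ⁿ-invariant: if z ∈ Δⁿ_P and ζ₁,…,ζₙ ∈ ℂ satisfy |ζ_j| = 1 for all j, then (ζ₁z₁,…,ζₙzₙ) ∈ Δⁿ_P. -/
/-- The map `φ(z) = (z₁/z₂, …, z_{n−1}/zₙ, zₙ)` (0-indexed over `Fin n`). -/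
noncomputable def phi {n : ℕ} (z : Fin n → ℂ) : Fin n → ℂ :=
  fun j => if h : (j : ℕ) + 1 < n then z j / z ⟨(j : ℕ) + 1, h⟩ else z j

/-- The P-triangle `Δⁿ_P`. -/
def HartogsTriangle {n : ℕ} (P : Fin n → MvPolynomial (Fin n) ℝ) : Set (Fin n → ℂ) :=
  {z | (∀ j : Fin n, 1 ≤ (j : ℕ) → z j ≠ 0) ∧
       ∀ j : Fin n, MvPolynomial.eval (fun k => ‖phi z k‖ ^ 2) (P j) < 1}

/-!
The map `φ` is a bijection of the set where `z₂, …, zₙ ≠ 0` onto itself, with continuous inverse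
`w ↦ (w₁ ⋯ wₙ, w₂ ⋯ wₙ, …, wₙ)`. Hence the triangle is the continuous image of the part of
the complete Reinhardt domain `{w | ∀ j, P_j(|w₁|², …, |wₙ|²) < 1}` where `w₂, …, wₙ ≠ 0`. That part
is nonempty (a neighbourhood of `0` meets a dense set), bounded (the terms in pure powers bound
every coordinate) and connected (its moduli form a set closed under coordinatewise minima and order
intervals, and the arguments are arbitrary).
-/

open MvPolynomial Set

section Polynomials

variable {σ R : Type*} [CommSemiring R] [PartialOrder R] [IsOrderedRing R] {p : MvPolynomial σ R}

theorem eval_mono_of_coeff_nonneg (hp : ∀ d, 0 ≤ p.coeff d) {x y : σ → R} (hx : 0 ≤ x)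
    (hxy : x ≤ y) : eval x p ≤ eval y p := by
  rw [eval_eq, eval_eq]
  gcongr with d _ k _
  · exact hp d
  · exact fun k _ => pow_nonneg (hx k) _
  · exact hx k
  · exact hxy k

theorem coeff_mul_prod_le_eval (hp : ∀ d, 0 ≤ p.coeff d) {x : σ → R} (hx : 0 ≤ x) (d : σ →₀ ℕ) :
    p.coeff d * d.prod (fun k m => x k ^ m) ≤ eval x p := by
  have term_nonneg (e : σ →₀ ℕ) : 0 ≤ p.coeff e * ∏ k ∈ e.support, x k ^ e k :=
    mul_nonneg (hp e) (Finset.prod_nonneg fun k _ => pow_nonneg (hx k) _)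
  rw [eval_eq]
  by_cases hd : d ∈ p.support
  · exact Finset.single_le_sum (fun e _ => term_nonneg e) hd
  · rw [notMem_support_iff.mp hd, zero_mul]
    exact Finset.sum_nonneg fun e _ => term_nonneg e

end Polynomials

section Connectedness

theorem isPreconnected_of_infClosed_of_ordConnected {E : Type*} [Lattice E] [AddCommGroup E]
    [IsOrderedAddMonoid E] [Module ℝ E] [PosSMulMono ℝ E] [TopologicalSpace E]
    [ContinuousAdd E] [ContinuousSMul ℝ E] {s : Set E} (hinf : InfClosed s)
    (hord : s.OrdConnected) : IsPreconnected s := by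
  refine isPreconnected_of_forall_pair fun x hx y hy => ?_
  have hxy : x ⊓ y ∈ s := hinf hx hy
  exact ⟨Icc (x ⊓ y) x ∪ Icc (x ⊓ y) y, union_subset (hord.out hxy hx) (hord.out hxy hy),
    .inl (right_mem_Icc.mpr inf_le_left), .inr (right_mem_Icc.mpr inf_le_right),
    IsPreconnected.union (x ⊓ y) (left_mem_Icc.mpr inf_le_left) (left_mem_Icc.mpr inf_le_right)
      (convex_Icc _ _).isPreconnected (convex_Icc _ _).isPreconnected⟩

theorem isPreconnected_preimage_pi_norm {ι : Type*} {S : Set (ι → ℝ)} (hS : IsPreconnected S)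
    (hnonneg : ∀ r ∈ S, 0 ≤ r) : IsPreconnected ((fun (w : ι → ℂ) k => ‖w k‖) ⁻¹' S) := by
  let polar (q : (ι → ℝ) × (ι → ℝ)) (k : ι) : ℂ := q.1 k * Complex.exp (q.2 k * Complex.I)
  have polar_continuous : Continuous polar := by fun_prop
  have norm_polar {r : ι → ℝ} (hr : r ∈ S) (θ : ι → ℝ) : (fun k => ‖polar (r, θ) k‖) = r := by
    funext k
    simp [polar, Complex.norm_exp_ofReal_mul_I, abs_of_nonneg (hnonneg r hr k)]
  have preimage_eq : (fun (w : ι → ℂ) k => ‖w k‖) ⁻¹' S = polar '' (S ×ˢ univ) := by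
    refine Subset.antisymm (fun w hw => ?_) ?_
    · exact ⟨(fun k => ‖w k‖, fun k => (w k).arg), ⟨hw, mem_univ _⟩,
        funext fun k => Complex.norm_mul_exp_arg_mul_I (w k)⟩
    · rintro _ ⟨⟨r, θ⟩, ⟨hr, -⟩, rfl⟩
      simpa only [mem_preimage, norm_polar hr] using hr
  rw [preimage_eq]
  exact (hS.prod isPreconnected_univ).image _ polar_continuous.continuousOn

end Connectedness

section PolynomialDomain

variable {ι σ : Type*}

/-- The complete Reinhardt domain `{w | ∀ j, P_j(|w₁|², …, |wₙ|²) < 1}` attached to a family of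
polynomials with nonnegative coefficients; the P-triangle is its pullback under `phi`. -/
def polynomialDomain (P : ι → MvPolynomial σ ℝ) : Set (σ → ℂ) :=
  {w | ∀ j, eval (fun k => ‖w k‖ ^ 2) (P j) < 1}

/-- The moduli of the points of `polynomialDomain P` whose coordinates in `A` do not vanish. -/
def polynomialModuli (A : Set σ) (P : ι → MvPolynomial σ ℝ) : Set (σ → ℝ) :=
  {r | 0 ≤ r ∧ (∀ k ∈ A, 0 < r k) ∧ ∀ j, eval (fun k => r k ^ 2) (P j) < 1}

variable {P : ι → MvPolynomial σ ℝ}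

theorem isOpen_polynomialDomain [Finite ι] : IsOpen (polynomialDomain P) := by
  simp only [polynomialDomain, ofPred_forall]
  refine isOpen_iInter_of_finite fun j => isOpen_lt ?_ continuous_const
  exact (continuous_eval (P j)).comp (by fun_prop)

theorem zero_mem_polynomialDomain (hconst : ∀ j, (P j).coeff 0 < 1) :
    0 ∈ polynomialDomain P := fun j => by
  have eval_zero : eval (0 : σ → ℝ) (P j) < 1 := by simpa [constantCoeff_eq] using hconst j
  simpa [Pi.zero_def] using eval_zero

theorem nonempty_pi_compl_zero_inter_polynomialDomain [Finite ι] (A : Set σ)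
    (hconst : ∀ j, (P j).coeff 0 < 1) :
    ((A.pi fun _ => {0}ᶜ) ∩ polynomialDomain P).Nonempty := by
  rw [inter_comm]
  exact (dense_pi A fun _ _ => dense_compl_singleton 0).inter_open_nonempty _
    isOpen_polynomialDomain ⟨0, zero_mem_polynomialDomain hconst⟩

theorem isBounded_polynomialDomain (hcoeff : ∀ j d, 0 ≤ (P j).coeff d)
    (hpow : ∀ k, ∃ j, ∃ m ≠ 0, 0 < (P j).coeff (Finsupp.single k m)) :
    Bornology.IsBounded (polynomialDomain P) := by
  refine Bornology.forall_isBounded_image_eval_iff.mp fun k => ?_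
  obtain ⟨j, m, hm, hc⟩ := hpow k
  set c := (P j).coeff (Finsupp.single k m)
  refine isBounded_iff_forall_norm_le.mpr ⟨max 1 c⁻¹, ?_⟩
  rintro _ ⟨w, hw, rfl⟩
  have pow_term_lt_one : c * ‖w k‖ ^ (2 * m) < 1 := calc
    c * ‖w k‖ ^ (2 * m) = c * (Finsupp.single k m).prod fun i e => (‖w i‖ ^ 2) ^ e := by
      rw [Finsupp.prod_single_index (h := fun i e => (‖w i‖ ^ 2) ^ e) (pow_zero _), pow_mul]
    _ ≤ eval (fun i => ‖w i‖ ^ 2) (P j) :=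
      coeff_mul_prod_le_eval (hcoeff j) (fun i => sq_nonneg ‖w i‖) _
    _ < 1 := hw j
  rcases le_total ‖w k‖ 1 with hle | hge
  · exact hle.trans (le_max_left _ _)
  · calc ‖w k‖ ≤ ‖w k‖ ^ (2 * m) := le_self_pow₀ hge (by positivity)
      _ ≤ c⁻¹ := (le_inv_mul_iff₀ hc |>.mpr pow_term_lt_one.le).trans_eq (mul_one _)
      _ ≤ max 1 c⁻¹ := le_max_right _ _

theorem infClosed_polynomialModuli (A : Set σ) (hcoeff : ∀ j d, 0 ≤ (P j).coeff d) :
    InfClosed (polynomialModuli A P) := by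
  rintro r ⟨hr, hrA, hrP⟩ s ⟨hs, hsA, -⟩
  have hinf : 0 ≤ r ⊓ s := le_inf hr hs
  refine ⟨hinf, fun k hk => lt_min (hrA k hk) (hsA k hk), fun j => ?_⟩
  refine (eval_mono_of_coeff_nonneg (hcoeff j) (fun k => sq_nonneg _) fun k => ?_).trans_lt (hrP j)
  exact pow_le_pow_left₀ (hinf k) (inf_le_left (a := r) k) 2

theorem ordConnected_polynomialModuli (A : Set σ) (hcoeff : ∀ j d, 0 ≤ (P j).coeff d) :
    (polynomialModuli A P).OrdConnected := by
  refine ⟨?_⟩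
  rintro r ⟨hr, hrA, -⟩ s ⟨-, -, hsP⟩ t ⟨hrt, hts⟩
  have ht : 0 ≤ t := hr.trans hrt
  refine ⟨ht, fun k hk => (hrA k hk).trans_le (hrt k), fun j => ?_⟩
  refine (eval_mono_of_coeff_nonneg (hcoeff j) (fun k => sq_nonneg _) fun k => ?_).trans_lt (hsP j)
  exact pow_le_pow_left₀ (ht k) (hts k) 2

theorem isPreconnected_pi_compl_zero_inter_polynomialDomain (A : Set σ)
    (hcoeff : ∀ j d, 0 ≤ (P j).coeff d) :
    IsPreconnected ((A.pi fun _ => {0}ᶜ) ∩ polynomialDomain P) := by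
  have moduli_preconnected : IsPreconnected (polynomialModuli A P) :=
    isPreconnected_of_infClosed_of_ordConnected (infClosed_polynomialModuli A hcoeff)
      (ordConnected_polynomialModuli A hcoeff)
  have eq_preimage_norm : (A.pi fun _ => {0}ᶜ) ∩ polynomialDomain P =
      (fun w k => ‖w k‖) ⁻¹' polynomialModuli A P := by
    ext w
    simp [polynomialModuli, polynomialDomain, Set.mem_pi, Pi.le_def]
  rw [eq_preimage_norm]
  exact isPreconnected_preimage_pi_norm moduli_preconnected fun r hr => hr.1

end PolynomialDomain

section SuffixProd

variable {M : Type*} [CommMonoid M] {n : ℕ}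

/-- The map `w ↦ (w₁ ⋯ wₙ, w₂ ⋯ wₙ, …, wₙ)`, which inverts `phi` where `z₂, …, zₙ ≠ 0`. -/
def suffixProd (w : Fin n → M) (j : Fin n) : M :=
  ∏ k ∈ Finset.Ici j, w k

theorem suffixProd_of_lt (w : Fin n → M) {j : Fin n} (h : (j : ℕ) + 1 < n) :
    suffixProd w j = w j * suffixProd w ⟨j + 1, h⟩ := by
  have Ioi_eq : Finset.Ioi j = Finset.Ici ⟨j + 1, h⟩ := by
    ext k
    simp only [Finset.mem_Ioi, Finset.mem_Ici, Fin.lt_def, Fin.le_def, Nat.succ_le_iff]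
  rw [suffixProd, ← Finset.mul_prod_Ioi_eq_prod_Ici, Ioi_eq, suffixProd]

theorem suffixProd_of_not_lt (w : Fin n → M) {j : Fin n} (h : ¬(j : ℕ) + 1 < n) :
    suffixProd w j = w j := by
  have Ioi_eq : Finset.Ioi j = ∅ := by
    ext k
    simp only [Finset.mem_Ioi, Fin.lt_def, Finset.notMem_empty, iff_false]
    omega
  rw [suffixProd, ← Finset.mul_prod_Ioi_eq_prod_Ici, Ioi_eq, Finset.prod_empty, mul_one]

theorem continuous_suffixProd [TopologicalSpace M] [ContinuousMul M] :
    Continuous (suffixProd : (Fin n → M) → Fin n → M) :=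
  continuous_pi fun _ => continuous_finsetProd _ fun _ _ => continuous_apply _

end SuffixProd

section Phi

variable {n : ℕ}

/-- The set `{z ∈ ℂⁿ | z₂, …, zₙ ≠ 0}` on which `phi` involves no division by zero. -/
def phiDomain (n : ℕ) : Set (Fin n → ℂ) :=
  {j : Fin n | 1 ≤ (j : ℕ)}.pi fun _ => {0}ᶜ

theorem isOpen_phiDomain : IsOpen (phiDomain n) :=
  isOpen_set_pi (toFinite _) fun _ _ => isOpen_compl_singleton

theorem continuousOn_phi : ContinuousOn phi (phiDomain n) := by
  refine continuousOn_pi.mpr fun j => ?_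
  by_cases h : (j : ℕ) + 1 < n
  · simp only [phi, h, dif_pos]
    exact (continuous_apply _).continuousOn.div (continuous_apply _).continuousOn
      fun z hz => hz _ (Nat.succ_pos j)
  · simp only [phi, h, dif_neg, not_false_eq_true]
    exact (continuous_apply j).continuousOn

theorem mapsTo_phi : MapsTo phi (phiDomain n) (phiDomain n) := by
  intro z hz j hj
  rw [phi]
  split_ifs with h
  · exact div_ne_zero (hz j hj) (hz _ (Nat.succ_pos j))
  · exact hz j hj

theorem mapsTo_suffixProd : MapsTo suffixProd (phiDomain n) (phiDomain n) := fun _ hw j hj =>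
  Finset.prod_ne_zero_iff.mpr fun k hk =>
    hw k (le_trans (b := (j : ℕ)) hj (Fin.le_def.mp (Finset.mem_Ici.mp hk)))

theorem leftInvOn_suffixProd_phi : LeftInvOn suffixProd phi (phiDomain n) := by
  intro z hz
  funext j
  induction j using WellFoundedGT.induction with
  | ind j ih =>
    by_cases h : (j : ℕ) + 1 < n
    · rw [suffixProd_of_lt _ h, ih ⟨j + 1, h⟩ (Nat.lt_succ_self j), phi, dif_pos h]
      exact div_mul_cancel₀ _ (hz _ (Nat.succ_pos j))
    · rw [suffixProd_of_not_lt _ h, phi, dif_neg h]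

theorem rightInvOn_suffixProd_phi : RightInvOn suffixProd phi (phiDomain n) := by
  intro w hw
  funext j
  rw [phi]
  split_ifs with h
  · rw [suffixProd_of_lt w h]
    exact mul_div_cancel_right₀ _ (mapsTo_suffixProd hw _ (Nat.succ_pos j))
  · exact suffixProd_of_not_lt w h

theorem norm_phi_mul_of_norm_eq_one {ζ : Fin n → ℂ} (hζ : ∀ j, ‖ζ j‖ = 1) (z : Fin n → ℂ)
    (k : Fin n) : ‖phi (fun j => ζ j * z j) k‖ = ‖phi z k‖ := by
  rw [phi, phi]
  split_ifs <;> simp only [norm_div, norm_mul, hζ, one_mul]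

end Phi

section Triangle

variable {n : ℕ} {P : Fin n → MvPolynomial (Fin n) ℝ}

theorem hartogsTriangle_eq_inter_preimage :
    HartogsTriangle P = phiDomain n ∩ phi ⁻¹' polynomialDomain P :=
  rfl

theorem hartogsTriangle_eq_image :
    HartogsTriangle P = suffixProd '' (phiDomain n ∩ polynomialDomain P) := by
  have image_suffixProd : suffixProd '' phiDomain n = phiDomain n :=
    Subset.antisymm mapsTo_suffixProd.image_subset
      (leftInvOn_suffixProd_phi.surjOn mapsTo_phi)
  rw [inter_comm, rightInvOn_suffixProd_phi.image_inter', image_suffixProd, inter_comm,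
    hartogsTriangle_eq_inter_preimage]

theorem isOpen_hartogsTriangle : IsOpen (HartogsTriangle P) :=
  continuousOn_phi.isOpen_inter_preimage isOpen_phiDomain isOpen_polynomialDomain

theorem isConnected_hartogsTriangle (hcoeff : ∀ j d, 0 ≤ (P j).coeff d)
    (hconst : ∀ j, (P j).coeff 0 < 1) : IsConnected (HartogsTriangle P) := by
  rw [hartogsTriangle_eq_image]
  exact IsConnected.image ⟨nonempty_pi_compl_zero_inter_polynomialDomain _ hconst,
    isPreconnected_pi_compl_zero_inter_polynomialDomain _ hcoeff⟩ _
    continuous_suffixProd.continuousOn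

theorem isBounded_hartogsTriangle (hcoeff : ∀ j d, 0 ≤ (P j).coeff d)
    (hpow : ∀ k, ∃ j, ∃ m ≠ 0, 0 < (P j).coeff (Finsupp.single k m)) :
    Bornology.IsBounded (HartogsTriangle P) := by
  have compact_closure : IsCompact (closure (polynomialDomain P)) :=
    (isBounded_polynomialDomain hcoeff hpow).isCompact_closure
  rw [hartogsTriangle_eq_image]
  exact (compact_closure.image continuous_suffixProd).isBounded.subset
    (image_mono (inter_subset_right.trans subset_closure))

theorem mul_mem_hartogsTriangle {z ζ : Fin n → ℂ} (hz : z ∈ HartogsTriangle P)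
    (hζ : ∀ j, ‖ζ j‖ = 1) : (fun j => ζ j * z j) ∈ HartogsTriangle P := by
  refine ⟨fun j hj => mul_ne_zero ?_ (hz.1 j hj), fun j => ?_⟩
  · exact norm_ne_zero_iff.mp ((hζ j).trans_ne one_ne_zero)
  · simpa only [norm_phi_mul_of_norm_eq_one hζ] using hz.2 j

end Triangle

theorem stmt1_general {n : ℕ} (P : Fin n → MvPolynomial (Fin n) ℝ)
    (hcoeff : ∀ j d, 0 ≤ (P j).coeff d)
    (hconst : ∀ j, (P j).coeff 0 < 1)
    (hpow : ∀ k, ∃ j, ∃ m ≠ 0, 0 < (P j).coeff (Finsupp.single k m)) :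
    (HartogsTriangle P).Nonempty ∧
    IsOpen (HartogsTriangle P) ∧
    IsConnected (HartogsTriangle P) ∧
    Bornology.IsBounded (HartogsTriangle P) ∧
    (∀ z ∈ HartogsTriangle P, ∀ ζ : Fin n → ℂ, (∀ j, ‖ζ j‖ = 1) →
      (fun j => ζ j * z j) ∈ HartogsTriangle P) :=
  have connected := isConnected_hartogsTriangle hcoeff hconst
  ⟨connected.nonempty, isOpen_hartogsTriangle, connected, isBounded_hartogsTriangle hcoeff hpow,
    fun _ hz _ hζ => mul_mem_hartogsTriangle hz hζ⟩

/-- for a positive regular polynomial tuple `P`, the P-triangle is a nonempty,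
open, connected, bounded and `𝕋ⁿ`-invariant subset of `ℂⁿ`. -/
theorem stmt1 {n : ℕ} (hn : 2 ≤ n) (P : Fin n → MvPolynomial (Fin n) ℝ)
    (hcoeff : ∀ j d, 0 ≤ (P j).coeff d)
    (hconst : ∀ j, (P j).coeff 0 = 0)
    (hlin : ∀ j k : Fin n, k ≠ j → (P j).coeff (Finsupp.single k 1) = 0)
    (hdiag : ∀ j : Fin n, 0 < (P j).coeff (Finsupp.single j 1)) :
    (HartogsTriangle P).Nonempty ∧
    IsOpen (HartogsTriangle P) ∧
    IsConnected (HartogsTriangle P) ∧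
    Bornology.IsBounded (HartogsTriangle P) ∧
    (∀ z ∈ HartogsTriangle P, ∀ ζ : Fin n → ℂ, (∀ j, ‖ζ j‖ = 1) →
      (fun j => ζ j * z j) ∈ HartogsTriangle P) := by
  exact stmt1_general P hcoeff (fun j => (hconst j).trans_lt one_pos)
    fun k => ⟨k, 1, one_ne_zero, hdiag k⟩
end

section
/- Let n ≥ 1 and let Q ∈ ℝ[z₁,…,zₙ] have nonnegative coefficients and zero constant term, and let B_Q = {z ∈ ℂⁿ : Q(|z₁|²,…,|zₙ|²) < 1}. Then B_Q is monomially convex: for every nonempty compact set K ⊆ B_Q, the monomial hull K̂ = {w ∈ ℂⁿ : |w^α| ≤ sup_{z∈K} |z^α| for every multi-index α ∈ ℕⁿ} is a compact subset of B_Q. -/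
/-!
Let `w` lie in the hull of `K`. If `P` has nonnegative coefficients, each term of `P` is at `w` at
most its value at some point of `K`, hence at most `sup_K P`; summing loses a factor, the number of
monomials of `P`. For the powers `Q ^ N` this number grows only polynomially in `N`, so that
`Q(w) ^ N ≤ C * N ^ n * (sup_K Q) ^ N`, and letting `N → ∞` yields `Q(w) ≤ sup_K Q` with no loss.
-/

open MvPolynomial Bornology Filter Topology

section NonnegCoeff

variable {σ R : Type*} [CommSemiring R] [PartialOrder R] [IsOrderedRing R] {P : MvPolynomial σ R}

theorem coeff_pow_nonneg (hP : ∀ d, 0 ≤ P.coeff d) (N : ℕ) (d : σ →₀ ℕ) :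
    0 ≤ (P ^ N).coeff d := by
  classical
  induction N generalizing d with
  | zero =>
    rw [pow_zero, coeff_one]
    split_ifs <;> simp
  | succ N ih =>
    rw [pow_succ, coeff_mul]
    exact Finset.sum_nonneg fun _ _ => mul_nonneg (ih _) (hP _)

theorem eval_nonneg_of_coeff_nonneg (hP : ∀ d, 0 ≤ P.coeff d) {x : σ → R} (hx : 0 ≤ x) :
    0 ≤ eval x P := by
  rw [eval_eq]
  exact Finset.sum_nonneg fun d _ =>
    mul_nonneg (hP d) (Finset.prod_nonneg fun i _ => pow_nonneg (hx i) _)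

theorem coeff_mul_prod_pow_le_eval (hP : ∀ d, 0 ≤ P.coeff d) {x : σ → R} (hx : 0 ≤ x)
    {d : σ →₀ ℕ} (hd : d ∈ P.support) :
    P.coeff d * d.prod (fun i k => x i ^ k) ≤ eval x P := by
  rw [eval_eq]
  exact Finset.single_le_sum (f := fun d => P.coeff d * d.prod fun i k => x i ^ k)
    (fun d _ => mul_nonneg (hP d) (Finset.prod_nonneg fun i _ => pow_nonneg (hx i) _)) hd

theorem eval_le_card_support_mul (hP : ∀ d, 0 ≤ P.coeff d) {S : Set (σ → R)} (hS : ∀ y ∈ S, 0 ≤ y)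
    {x : σ → R}
    (hx : ∀ d : σ →₀ ℕ, ∃ y ∈ S, d.prod (fun i k => x i ^ k) ≤ d.prod fun i k => y i ^ k)
    {M : R} (hM : ∀ y ∈ S, eval y P ≤ M) :
    eval x P ≤ P.support.card * M := by
  rw [eval_eq, ← nsmul_eq_mul]
  refine Finset.sum_le_card_nsmul _ _ _ fun d hd => ?_
  obtain ⟨y, hy, hxy⟩ := hx d
  calc P.coeff d * d.prod (fun i k => x i ^ k)
      ≤ P.coeff d * d.prod (fun i k => y i ^ k) := mul_le_mul_of_nonneg_left hxy (hP d)
    _ ≤ eval y P := coeff_mul_prod_pow_le_eval hP (hS y hy) hd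
    _ ≤ M := hM y hy

end NonnegCoeff

section Support

variable {σ R : Type*} [Fintype σ] [CommSemiring R]

theorem card_support_le_totalDegree_add_one_pow (P : MvPolynomial σ R) :
    P.support.card ≤ (P.totalDegree + 1) ^ Fintype.card σ := by
  classical
  have support_subset : P.support ⊆
      Finset.Iic (Finsupp.equivFunOnFinite.symm fun _ => P.totalDegree) := fun d hd =>
    Finset.mem_Iic.2 fun i => (Finsupp.le_degree i d).trans (le_totalDegree hd)
  refine (Finset.card_le_card support_subset).trans ?_
  simp only [Finsupp.card_Iic, Nat.card_Iic, Finsupp.equivFunOnFinite_symm_apply_apply,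
    Finset.prod_const]
  exact Nat.pow_le_pow_right (Nat.succ_pos _) (Finset.card_le_univ _)

theorem card_support_pow_le (P : MvPolynomial σ R) {N : ℕ} (hN : 0 < N) :
    (P ^ N).support.card ≤ ((P.totalDegree + 1) * N) ^ Fintype.card σ := by
  refine (card_support_le_totalDegree_add_one_pow _).trans (Nat.pow_le_pow_left ?_ _)
  linarith [totalDegree_pow P N]

end Support

theorem le_of_forall_pow_le_mul_pow {a b C : ℝ} (k : ℕ) (hb : 0 ≤ b)
    (h : ∀ N : ℕ, 0 < N → a ^ N ≤ C * N ^ k * b ^ N) : a ≤ b := by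
  by_contra! hba
  have ha : 0 < a := hb.trans_lt hba
  have one_le : ∀ᶠ N : ℕ in atTop, 1 ≤ C * (N ^ k * (b / a) ^ N) := by
    filter_upwards [eventually_gt_atTop 0] with N hN
    rw [div_pow, ← mul_assoc, ← mul_div_assoc, one_le_div (pow_pos ha N)]
    exact h N hN
  have tendsto_zero : Tendsto (fun N : ℕ => C * (N ^ k * (b / a) ^ N)) atTop (𝓝 0) := by
    simpa only [mul_zero] using (tendsto_pow_const_mul_const_pow_of_lt_one k
      (div_nonneg hb ha.le) ((div_lt_one ha).2 hba)).const_mul C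
  exact absurd (ge_of_tendsto tendsto_zero one_le) (by norm_num)

theorem eval_le_of_forall_monomial_le {σ : Type*} [Finite σ] {Q : MvPolynomial σ ℝ}
    (hQ : ∀ d, 0 ≤ Q.coeff d) {S : Set (σ → ℝ)} (hS : ∀ y ∈ S, 0 ≤ y) {x : σ → ℝ}
    (hx : ∀ d : σ →₀ ℕ, ∃ y ∈ S, d.prod (fun i k => x i ^ k) ≤ d.prod fun i k => y i ^ k)
    {M : ℝ} (hM : ∀ y ∈ S, eval y Q ≤ M) :
    eval x Q ≤ M := by
  cases nonempty_fintype σ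
  have eval_nonneg : ∀ y ∈ S, 0 ≤ eval y Q := fun y hy =>
    eval_nonneg_of_coeff_nonneg hQ (hS y hy)
  obtain ⟨y₀, hy₀, -⟩ := hx 0
  have M_nonneg : 0 ≤ M := (eval_nonneg y₀ hy₀).trans (hM y₀ hy₀)
  refine le_of_forall_pow_le_mul_pow (C := (Q.totalDegree + 1) ^ Fintype.card σ)
    (Fintype.card σ) M_nonneg fun N hN => ?_
  calc eval x Q ^ N = eval x (Q ^ N) := (map_pow _ _ _).symm
    _ ≤ (Q ^ N).support.card * M ^ N :=
      eval_le_card_support_mul (coeff_pow_nonneg hQ N) hS hx fun y hy => by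
        rw [map_pow]
        exact pow_le_pow_left₀ (eval_nonneg y hy) (hM y hy) N
    _ ≤ ((Q.totalDegree + 1) * N) ^ Fintype.card σ * M ^ N := by
      gcongr
      exact_mod_cast card_support_pow_le Q hN
    _ = (Q.totalDegree + 1) ^ Fintype.card σ * N ^ Fintype.card σ * M ^ N := by rw [mul_pow]

/-- The `Q`-ball `B_Q`, over an arbitrary normed field in place of `ℂ`. -/
def qBall {ι : Type*} (𝕜 : Type*) [NormedField 𝕜] (Q : MvPolynomial ι ℝ) : Set (ι → 𝕜) :=
  {z | eval (fun j => ‖z j‖ ^ 2) Q < 1}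

section MonomialHull

variable {ι 𝕜 : Type*} [Fintype ι] [NormedField 𝕜] {K : Set (ι → 𝕜)}

/-- The monomial hull `K̂` of `K`. The supremum is the real `sSup`, so it is the intended one only
when every monomial is bounded on the nonempty set `K`. -/
def monomialHull (K : Set (ι → 𝕜)) : Set (ι → 𝕜) :=
  {w | ∀ α : ι → ℕ, ‖∏ j, w j ^ α j‖ ≤ sSup ((fun z : ι → 𝕜 => ‖∏ j, z j ^ α j‖) '' K)}

theorem isClosed_monomialHull (K : Set (ι → 𝕜)) : IsClosed (monomialHull K) := by
  simp only [monomialHull, Set.ofPred_forall]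
  exact isClosed_iInter fun α => isClosed_le (by fun_prop) continuous_const

theorem norm_apply_le_sSup_of_mem_monomialHull {w : ι → 𝕜} (hw : w ∈ monomialHull K) (i : ι) :
    ‖w i‖ ≤ sSup ((fun z : ι → 𝕜 => ‖z i‖) '' K) := by
  classical
  simpa [Pi.single_apply, pow_ite] using hw (Pi.single i 1)

theorem isBounded_monomialHull (hK : IsBounded K) : IsBounded (monomialHull K) := by
  obtain ⟨C, hC, norm_le⟩ := hK.exists_pos_norm_le
  refine isBounded_iff_forall_norm_le.2 ⟨C, fun w hw => (pi_norm_le_iff_of_nonneg hC.le).2 fun i =>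
    (norm_apply_le_sSup_of_mem_monomialHull hw i).trans (Real.sSup_le ?_ hC.le)⟩
  rintro _ ⟨z, hz, rfl⟩
  exact (norm_le_pi_norm z i).trans (norm_le z hz)

theorem isCompact_monomialHull [ProperSpace 𝕜] (hK : IsBounded K) :
    IsCompact (monomialHull K) :=
  Metric.isCompact_of_isClosed_isBounded (isClosed_monomialHull K) (isBounded_monomialHull hK)

theorem exists_norm_monomial_le_of_mem_monomialHull (hK : IsCompact K) (hKne : K.Nonempty)
    {w : ι → 𝕜} (hw : w ∈ monomialHull K) (α : ι → ℕ) :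
    ∃ z ∈ K, ‖∏ j, w j ^ α j‖ ≤ ‖∏ j, z j ^ α j‖ := by
  obtain ⟨z, hz, sSup_eq⟩ := hK.exists_sSup_image_eq hKne
    (f := fun z : ι → 𝕜 => ‖∏ j, z j ^ α j‖) (by fun_prop)
  exact ⟨z, hz, (hw α).trans_eq sSup_eq⟩

theorem prod_norm_sq_pow (z : ι → 𝕜) (d : ι →₀ ℕ) :
    d.prod (fun i k => (‖z i‖ ^ 2) ^ k) = ‖∏ i, z i ^ d i‖ ^ 2 := by
  rw [Finsupp.prod_pow, norm_prod, ← Finset.prod_pow]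
  simp only [norm_pow, pow_right_comm]

theorem eval_norm_sq_le_of_mem_monomialHull {Q : MvPolynomial ι ℝ} (hQ : ∀ d, 0 ≤ Q.coeff d)
    (hK : IsCompact K) (hKne : K.Nonempty) {M : ℝ}
    (hM : ∀ z ∈ K, eval (fun j => ‖z j‖ ^ 2) Q ≤ M) {w : ι → 𝕜} (hw : w ∈ monomialHull K) :
    eval (fun j => ‖w j‖ ^ 2) Q ≤ M := by
  refine eval_le_of_forall_monomial_le hQ (S := (fun (z : ι → 𝕜) j => ‖z j‖ ^ 2) '' K)
    (Set.forall_mem_image.2 fun z _ j => sq_nonneg ‖z j‖) (fun d => ?_)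
    (Set.forall_mem_image.2 hM)
  obtain ⟨z, hz, hwz⟩ := exists_norm_monomial_le_of_mem_monomialHull hK hKne hw d
  refine ⟨_, Set.mem_image_of_mem _ hz, ?_⟩
  simpa only [prod_norm_sq_pow] using pow_le_pow_left₀ (norm_nonneg _) hwz 2

theorem monomialHull_subset_qBall {Q : MvPolynomial ι ℝ} (hQ : ∀ d, 0 ≤ Q.coeff d)
    (hK : IsCompact K) (hKne : K.Nonempty) (hKB : K ⊆ qBall 𝕜 Q) :
    monomialHull K ⊆ qBall 𝕜 Q := by
  have eval_continuous : Continuous fun z : ι → 𝕜 => eval (fun j => ‖z j‖ ^ 2) Q :=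
    (continuous_eval Q).comp (by fun_prop)
  obtain ⟨z₀, hz₀, hmax⟩ := hK.exists_isMaxOn hKne eval_continuous.continuousOn
  exact fun w hw => (eval_norm_sq_le_of_mem_monomialHull hQ hK hKne hmax hw).trans_lt (hKB hz₀)

theorem stmt4_general [ProperSpace 𝕜] {Q : MvPolynomial ι ℝ} (hQ : ∀ d, 0 ≤ Q.coeff d)
    (hK : IsCompact K) (hKne : K.Nonempty) (hKB : K ⊆ qBall 𝕜 Q) :
    IsCompact (monomialHull K) ∧ monomialHull K ⊆ qBall 𝕜 Q :=
  ⟨isCompact_monomialHull hK.isBounded, monomialHull_subset_qBall hQ hK hKne hKB⟩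

end MonomialHull

/-- the Q-ball `B_Q` is monomially convex: for every nonempty compact
`K ⊆ B_Q`, the monomial hull
`K̂ = {w : |w^α| ≤ sup_{z∈K} |z^α| for all α}` is a compact subset of `B_Q`. -/
theorem stmt4 {n : ℕ} (hn : 1 ≤ n) (Q : MvPolynomial (Fin n) ℝ)
    (hcoeff : ∀ d, 0 ≤ Q.coeff d) (hconst : Q.coeff 0 = 0)
    (K : Set (Fin n → ℂ)) (hK : IsCompact K) (hKne : K.Nonempty)
    (hKB : K ⊆ {z : Fin n → ℂ | MvPolynomial.eval (fun j => ‖z j‖ ^ 2) Q < 1}) :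
    IsCompact {w : Fin n → ℂ | ∀ α : Fin n → ℕ,
        ‖∏ j, w j ^ α j‖ ≤ sSup ((fun z : Fin n → ℂ => ‖∏ j, z j ^ α j‖) '' K)} ∧
    {w : Fin n → ℂ | ∀ α : Fin n → ℕ,
        ‖∏ j, w j ^ α j‖ ≤ sSup ((fun z : Fin n → ℂ => ‖∏ j, z j ^ α j‖) '' K)} ⊆
      {z : Fin n → ℂ | MvPolynomial.eval (fun j => ‖z j‖ ^ 2) Q < 1} := by
  exact stmt4_general hcoeff hK hKne hKB
end

section
/- Let P = (P₁,…,Pₙ) be a positive regular polynomial n-tuple, n ≥ 2, and let w ∈ Δⁿ_P. Then the torus K = {z ∈ ℂⁿ : |z_j| = |w_j| for all j} is a compact subset of Δⁿ_P, its monomial hull in Δⁿ_P, namely K̂ = {ζ ∈ Δⁿ_P : |ζ^α| ≤ sup_{z∈K} |z^α| for every multi-index α ∈ ℕⁿ}, equals {ζ ∈ Δⁿ_P : |ζ_j| ≤ |w_j| for all j}, and K̂ is not closed in ℂⁿ (0 lies in the closure of K̂ but not in K̂); in particular Δⁿ_P is not monomially convex. -/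
/-- The torus through `w`. -/
def torusThrough {n : ℕ} (w : Fin n → ℂ) : Set (Fin n → ℂ) :=
  {z | ∀ j, ‖z j‖ = ‖w j‖}

/-- The monomial hull of `torusThrough w` inside `Δⁿ_P`. -/
def torusHull {n : ℕ} (P : Fin n → MvPolynomial (Fin n) ℝ) (w : Fin n → ℂ) :
    Set (Fin n → ℂ) :=
  {ζ ∈ HartogsTriangle P | ∀ α : Fin n → ℕ,
    ‖∏ j, ζ j ^ α j‖ ≤
      sSup ((fun z : Fin n → ℂ => ‖∏ j, z j ^ α j‖) '' torusThrough w)}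

/-!
Every monomial has constant modulus on the torus through `w`, and the coordinates are themselves
monomials, so the hull is cut out by the inequalities `‖ζ j‖ ≤ ‖w j‖`. Multiplying `z` by a scalar
`c` with `0 < ‖c‖ ≤ 1` leaves the quotients `z_j / z_{j+1}` unchanged and shrinks the last
coordinate; since a polynomial with nonnegative coefficients is monotone on the nonnegative orthant,
the triangle, and with it the hull, is stable under such scalings. Letting `c → 0`, the hull
accumulates at the origin, which lies outside the triangle because its second coordinate vanishes.
-/

open Filter MvPolynomial Set Topology

theorem eval_le_eval_of_coeff_nonneg {σ R : Type*} [CommSemiring R] [PartialOrder R]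
    [IsOrderedRing R] {p : MvPolynomial σ R} (hp : ∀ d, 0 ≤ p.coeff d) {x y : σ → R}
    (hx : 0 ≤ x) (hxy : x ≤ y) : eval x p ≤ eval y p := by
  rw [eval_eq, eval_eq]
  refine Finset.sum_le_sum fun d _ => mul_le_mul_of_nonneg_left ?_ (hp d)
  exact Finset.prod_le_prod (fun k _ => pow_nonneg (hx k) _)
    fun k _ => pow_le_pow_left₀ (hx k) (hxy k) _

theorem forall_prod_pow_le_prod_pow_iff {ι R : Type*} [Fintype ι] [CommSemiring R]
    [PartialOrder R] [IsOrderedRing R] {x y : ι → R} (hx : 0 ≤ x) :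
    (∀ α : ι → ℕ, ∏ j, x j ^ α j ≤ ∏ j, y j ^ α j) ↔ x ≤ y := by
  classical
  refine ⟨fun h j => ?_, fun h α => ?_⟩
  · simpa [Pi.single_apply, pow_ite, Finset.prod_ite_eq'] using h (Pi.single j 1)
  · exact Finset.prod_le_prod (fun j _ => pow_nonneg (hx j) _)
      fun j _ => pow_le_pow_left₀ (hx j) (h j) _

theorem zero_mem_closure_of_eventually_smul_mem {𝕜 E : Type*} [Zero 𝕜] [TopologicalSpace 𝕜]
    [NeBot (𝓝[≠] (0 : 𝕜))] [Zero E] [TopologicalSpace E] [SMulWithZero 𝕜 E] [ContinuousSMul 𝕜 E]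
    {s : Set E} {x : E} (h : ∀ᶠ c in 𝓝[≠] (0 : 𝕜), c • x ∈ s) : (0 : E) ∈ closure s := by
  have hlim : Tendsto (fun c : 𝕜 => c • x) (𝓝[≠] 0) (𝓝 0) := by
    have hcont : Continuous fun c : 𝕜 => c • x := by fun_prop
    simpa only [zero_smul] using (hcont.tendsto 0).mono_left nhdsWithin_le_nhds
  exact mem_closure_of_tendsto hlim h

section Triangle

variable {n : ℕ} {P : Fin n → MvPolynomial (Fin n) ℝ} {z w : Fin n → ℂ} {c : ℂ}

theorem norm_phi_congr (h : ∀ j, ‖z j‖ = ‖w j‖) (k : Fin n) : ‖phi z k‖ = ‖phi w k‖ := by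
  unfold phi
  split_ifs
  · rw [norm_div, norm_div, h, h]
  · exact h k

theorem norm_phi_smul_le (hc₀ : c ≠ 0) (hc₁ : ‖c‖ ≤ 1) (z : Fin n → ℂ) (k : Fin n) :
    ‖phi (c • z) k‖ ≤ ‖phi z k‖ := by
  unfold phi
  split_ifs
  · simp only [Pi.smul_apply, smul_eq_mul, mul_div_mul_left _ _ hc₀, le_refl]
  · rw [Pi.smul_apply, norm_smul]
    exact mul_le_of_le_one_left (norm_nonneg _) hc₁

theorem smul_mem_hartogsTriangle (hP : ∀ j d, 0 ≤ (P j).coeff d) (hc₀ : c ≠ 0) (hc₁ : ‖c‖ ≤ 1)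
    (hz : z ∈ HartogsTriangle P) : c • z ∈ HartogsTriangle P := by
  refine ⟨fun j hj => smul_ne_zero hc₀ (hz.1 j hj), fun j => ?_⟩
  calc eval (fun k => ‖phi (c • z) k‖ ^ 2) (P j)
      ≤ eval (fun k => ‖phi z k‖ ^ 2) (P j) :=
        eval_le_eval_of_coeff_nonneg (hP j) (fun k => sq_nonneg _) fun k =>
          pow_le_pow_left₀ (norm_nonneg _) (norm_phi_smul_le hc₀ hc₁ z k) 2
    _ < 1 := hz.2 j

theorem zero_notMem_hartogsTriangle (hn : 2 ≤ n) (P : Fin n → MvPolynomial (Fin n) ℝ) :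
    0 ∉ HartogsTriangle P :=
  fun h => h.1 ⟨1, hn⟩ le_rfl rfl

end Triangle

section Torus

variable {n : ℕ} {P : Fin n → MvPolynomial (Fin n) ℝ} {w ζ : Fin n → ℂ} {c : ℂ}

theorem torusThrough_eq_pi_sphere (w : Fin n → ℂ) :
    torusThrough w = univ.pi fun j => Metric.sphere 0 ‖w j‖ := by
  ext z
  simp only [torusThrough, mem_ofPred_eq, mem_univ_pi, mem_sphere_zero_iff_norm]

theorem isCompact_torusThrough (w : Fin n → ℂ) : IsCompact (torusThrough w) := by
  rw [torusThrough_eq_pi_sphere]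
  exact isCompact_univ_pi fun j => isCompact_sphere _ _

theorem torusThrough_subset_hartogsTriangle (hw : w ∈ HartogsTriangle P) :
    torusThrough w ⊆ HartogsTriangle P := by
  refine fun z hz => ⟨fun j hj => ?_, fun j => ?_⟩
  · rw [← norm_ne_zero_iff, hz j, norm_ne_zero_iff]
    exact hw.1 j hj
  · simpa only [norm_phi_congr hz] using hw.2 j

theorem sSup_norm_prod_pow_image_torusThrough (w : Fin n → ℂ) (α : Fin n → ℕ) :
    sSup ((fun z : Fin n → ℂ => ‖∏ j, z j ^ α j‖) '' torusThrough w) = ∏ j, ‖w j‖ ^ α j := by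
  have hconst : EqOn (fun z : Fin n → ℂ => ‖∏ j, z j ^ α j‖) (fun _ => ∏ j, ‖w j‖ ^ α j)
      (torusThrough w) := fun z hz => by simp only [norm_prod, norm_pow, hz _]
  have hne : (torusThrough w).Nonempty := ⟨w, fun _ => rfl⟩
  rw [hconst.image_eq, hne.image_const, csSup_singleton]

theorem torusHull_eq (P : Fin n → MvPolynomial (Fin n) ℝ) (w : Fin n → ℂ) :
    torusHull P w = {ζ ∈ HartogsTriangle P | ∀ j, ‖ζ j‖ ≤ ‖w j‖} := by
  ext ζ
  simp only [torusHull, sSup_norm_prod_pow_image_torusThrough, mem_ofPred_eq]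
  simp only [norm_prod, norm_pow]
  exact and_congr_right fun _ => forall_prod_pow_le_prod_pow_iff fun j => norm_nonneg (ζ j)

theorem self_mem_torusHull (hw : w ∈ HartogsTriangle P) : w ∈ torusHull P w := by
  rw [torusHull_eq]
  exact ⟨hw, fun _ => le_rfl⟩

theorem smul_mem_torusHull (hP : ∀ j d, 0 ≤ (P j).coeff d) (hc₀ : c ≠ 0) (hc₁ : ‖c‖ ≤ 1)
    (hζ : ζ ∈ torusHull P w) : c • ζ ∈ torusHull P w := by
  rw [torusHull_eq] at hζ ⊢
  refine ⟨smul_mem_hartogsTriangle hP hc₀ hc₁ hζ.1, fun j => ?_⟩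
  rw [Pi.smul_apply, norm_smul]
  exact (mul_le_of_le_one_left (norm_nonneg _) hc₁).trans (hζ.2 j)

theorem zero_mem_closure_torusHull (hP : ∀ j d, 0 ≤ (P j).coeff d) (hw : w ∈ HartogsTriangle P) :
    0 ∈ closure (torusHull P w) := by
  have hball : ∀ᶠ c : ℂ in 𝓝[≠] 0, c ∈ Metric.closedBall 0 1 :=
    mem_nhdsWithin_of_mem_nhds (Metric.closedBall_mem_nhds 0 one_pos)
  refine zero_mem_closure_of_eventually_smul_mem (𝕜 := ℂ) (x := w) ?_
  filter_upwards [hball, self_mem_nhdsWithin] with c hc₁ hc₀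
  exact smul_mem_torusHull hP hc₀ (mem_closedBall_zero_iff.mp hc₁) (self_mem_torusHull hw)

theorem zero_notMem_torusHull (hn : 2 ≤ n) (P : Fin n → MvPolynomial (Fin n) ℝ)
    (w : Fin n → ℂ) : 0 ∉ torusHull P w :=
  fun h => zero_notMem_hartogsTriangle hn P h.1

end Torus

theorem stmt5_general {n : ℕ} (hn : 2 ≤ n) (P : Fin n → MvPolynomial (Fin n) ℝ)
    (hcoeff : ∀ j d, 0 ≤ (P j).coeff d)
    (w : Fin n → ℂ) (hw : w ∈ HartogsTriangle P) :
    IsCompact (torusThrough w) ∧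
    torusThrough w ⊆ HartogsTriangle P ∧
    torusHull P w = {ζ ∈ HartogsTriangle P | ∀ j, ‖ζ j‖ ≤ ‖w j‖} ∧
    (0 : Fin n → ℂ) ∈ closure (torusHull P w) ∧
    (0 : Fin n → ℂ) ∉ torusHull P w ∧
    ¬ IsClosed (torusHull P w) := by
  have hcl := zero_mem_closure_torusHull hcoeff hw
  have hnot := zero_notMem_torusHull hn P w
  exact ⟨isCompact_torusThrough w, torusThrough_subset_hartogsTriangle hw, torusHull_eq P w,
    hcl, hnot, fun hclosed => hnot (hclosed.closure_eq ▸ hcl)⟩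

/-- for `w ∈ Δⁿ_P`, the torus `K = {z : |z_j| = |w_j| ∀j}` is a compact subset
of `Δⁿ_P`, its monomial hull in `Δⁿ_P` equals `{ζ ∈ Δⁿ_P : |ζ_j| ≤ |w_j| ∀j}`, and this hull
is not closed in `ℂⁿ` (0 lies in its closure but not in the hull); in particular `Δⁿ_P` is
not monomially convex. -/
theorem stmt5 {n : ℕ} (hn : 2 ≤ n) (P : Fin n → MvPolynomial (Fin n) ℝ)
    (hcoeff : ∀ j d, 0 ≤ (P j).coeff d)
    (hconst : ∀ j, (P j).coeff 0 = 0)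
    (hlin : ∀ j k : Fin n, k ≠ j → (P j).coeff (Finsupp.single k 1) = 0)
    (hdiag : ∀ j : Fin n, 0 < (P j).coeff (Finsupp.single j 1))
    (w : Fin n → ℂ) (hw : w ∈ HartogsTriangle P) :
    IsCompact (torusThrough w) ∧
    torusThrough w ⊆ HartogsTriangle P ∧
    torusHull P w = {ζ ∈ HartogsTriangle P | ∀ j, ‖ζ j‖ ≤ ‖w j‖} ∧
    (0 : Fin n → ℂ) ∈ closure (torusHull P w) ∧
    (0 : Fin n → ℂ) ∉ torusHull P w ∧
    ¬ IsClosed (torusHull P w) :=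
  stmt5_general hn P hcoeff w hw
end

section
/- Let P = (P₁,…,Pₙ) be a positive regular polynomial n-tuple, n ≥ 2, and m = (m₁,…,mₙ) with each m_j ≥ 1. For z, w ∈ Δⁿ_P let u(z,w) ∈ ℂⁿ be the vector with k-th coordinate φ(z)_k · conj(φ(w)_k). Then: (a) for every z, w ∈ Δⁿ_P and every j, P_j^ℂ(u(z,w)) ≠ 1 (where P_j^ℂ is P_j with coefficients viewed in ℂ), so that the kernel K(z,w) = (∏_{j=2}^n z_j·conj(w_j))^{−1} · ∏_{j=1}^n (1 − P_j^ℂ(u(z,w)))^{−m_j} is well defined; and (b) K is positive semi-definite: for every N ≥ 1, all points z^{(1)},…,z^{(N)} ∈ Δⁿ_P and all c₁,…,c_N ∈ ℂ, the complex number Σ_{i,l=1}^N c_i · conj(c_l) · K(z^{(i)}, z^{(l)}) is real and nonnegative. -/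
open scoped ComplexOrder

/-- The Hadamard-type vector `u(z,w)_k = φ(z)_k · conj(φ(w)_k)`. -/
noncomputable def uVec {n : ℕ} (z w : Fin n → ℂ) : Fin n → ℂ :=
  fun k => phi z k * (starRingEnd ℂ) (phi w k)

/-- The kernel `K(z,w)`. -/
noncomputable def kerPm {n : ℕ} (P : Fin n → MvPolynomial (Fin n) ℝ) (m : Fin n → ℕ)
    (z w : Fin n → ℂ) : ℂ :=
  (∏ j ∈ Finset.univ.filter (fun j : Fin n => 1 ≤ (j : ℕ)),
      z j * (starRingEnd ℂ) (w j))⁻¹ *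
    ∏ j, ((1 - MvPolynomial.aeval (uVec z w) (P j)) ^ m j)⁻¹

/-!
Positive semidefinite kernels on a set `X` form a closed subsemiring of the functions `X → X → ℂ`
(under pointwise multiplication, by the Schur product theorem), and this subsemiring contains every
kernel `f x * conj (f y)`. Hence a polynomial with nonnegative coefficients in the kernels
`φ(z)ₖ * conj (φ(w)ₖ)` is again such a kernel, and on the `P`-triangle its diagonal is less than
`1`. Cauchy-Schwarz carries that bound over to all pairs of points, so that `1 - P_j` does not
vanish and its inverse is a geometric series of positive semidefinite kernels.
-/

open scoped ComplexConjugate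

section PosSemidefKernels

variable {𝕜 X : Type*} [RCLike 𝕜]

theorem posSemidef_mul_conj (f : X → 𝕜) :
    (Matrix.of fun x y => f x * conj (f y)).PosSemidef := by
  refine ⟨Matrix.IsHermitian.ext fun x y => by simp [mul_comm], fun c => ?_⟩
  have sum_eq : (c.sum fun x cx => c.sum fun y cy => star cx * (f x * conj (f y)) * cy) =
      (∑ x ∈ c.support, conj (c x) * f x) * conj (∑ y ∈ c.support, conj (c y) * f y) := by
    simp only [Finsupp.sum, map_sum, map_mul, RCLike.conj_conj, Finset.sum_mul_sum,
      RCLike.star_def]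
    exact Finset.sum_congr rfl fun x _ => Finset.sum_congr rfl fun y _ => by ring
  simpa only [Matrix.of_apply, sum_eq] using! mul_star_self_nonneg _

variable (𝕜 X) in
/-- The positive semidefinite kernels on `X`, as a subsemiring of the functions `X → X → 𝕜` under
pointwise operations. A kernel is encoded as a matrix indexed by the possibly infinite set `X`,
since `Matrix.PosSemidef` tests against finitely supported vectors. -/
def posSemidefKernels : Subsemiring (X → X → 𝕜) where
  carrier := {K | (Matrix.of K).PosSemidef}
  mul_mem' := Matrix.PosSemidef.hadamard
  one_mem' := by
    simpa only [Set.mem_ofPred_eq, map_one, mul_one] using!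
      posSemidef_mul_conj fun _ : X => (1 : 𝕜)
  add_mem' := Matrix.PosSemidef.add
  zero_mem' := Matrix.PosSemidef.zero

namespace posSemidefKernels

variable {K : X → X → 𝕜}

theorem mul_conj_mem (f : X → 𝕜) : (fun x y => f x * conj (f y)) ∈ posSemidefKernels 𝕜 X :=
  posSemidef_mul_conj f

theorem algebraMap_mem {a : ℝ} (ha : 0 ≤ a) :
    algebraMap ℝ (X → X → 𝕜) a ∈ posSemidefKernels 𝕜 X := by
  rw [Algebra.algebraMap_eq_smul_one]
  exact Matrix.PosSemidef.smul (one_mem (posSemidefKernels 𝕜 X)) ha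

theorem comp_mem {Y : Type*} (hK : K ∈ posSemidefKernels 𝕜 X) (e : Y → X) :
    (fun x y => K (e x) (e y)) ∈ posSemidefKernels 𝕜 Y :=
  Matrix.PosSemidef.submatrix hK e

theorem aeval_mem {σ : Type*} {p : MvPolynomial σ ℝ} (hp : ∀ d, 0 ≤ p.coeff d)
    {A : σ → X → X → 𝕜} (hA : ∀ k, A k ∈ posSemidefKernels 𝕜 X) :
    (fun x y => MvPolynomial.aeval (fun k => A k x y) p) ∈ posSemidefKernels 𝕜 X := by
  have aeval_pointwise : (fun x y => MvPolynomial.aeval (fun k => A k x y) p) =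
      MvPolynomial.aeval A p := by
    ext x y
    simp [MvPolynomial.aeval_def, MvPolynomial.eval₂_eq]
  rw [aeval_pointwise, MvPolynomial.aeval_def, MvPolynomial.eval₂_eq]
  exact sum_mem fun d _ => mul_mem (algebraMap_mem (hp d)) (prod_mem fun k _ => pow_mem (hA k) _)

theorem isClosed : IsClosed (posSemidefKernels 𝕜 X : Set (X → X → 𝕜)) := by
  have hermitian : IsClosed {K : X → X → 𝕜 | (Matrix.of K).IsHermitian} := by
    simp only [Matrix.IsHermitian.ext_iff, Matrix.of_apply, Set.ofPred_forall]
    exact isClosed_iInter fun x => isClosed_iInter fun y =>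
      isClosed_eq (by fun_prop) (by fun_prop)
  have nonneg : IsClosed {K : X → X → 𝕜 | ∀ c : X →₀ 𝕜,
      0 ≤ c.sum fun x cx => c.sum fun y cy => star cx * Matrix.of K x y * cy} := by
    simp only [Set.ofPred_forall, Finsupp.sum, Matrix.of_apply]
    exact isClosed_iInter fun c => isClosed_le (by fun_prop) (by fun_prop)
  exact hermitian.inter nonneg

theorem diag_nonneg (hK : K ∈ posSemidefKernels 𝕜 X) (x : X) : 0 ≤ K x x :=
  Matrix.PosSemidef.diag_nonneg hK

theorem norm_apply_sq_le (hK : K ∈ posSemidefKernels 𝕜 X) (x y : X) :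
    ‖K x y‖ ^ 2 ≤ ‖K x x‖ * ‖K y y‖ := by
  have det_nonneg : 0 ≤ K x x * K y y - K x y * K y x := by
    simpa only [Matrix.det_fin_two] using! (Matrix.PosSemidef.submatrix hK ![x, y]).det_nonneg
  have conj_symm : K y x = conj (K x y) := (hK.1.apply y x).symm
  rw [conj_symm, RCLike.mul_conj, ← RCLike.norm_of_nonneg' (diag_nonneg hK x),
    ← RCLike.norm_of_nonneg' (diag_nonneg hK y), sub_nonneg] at det_nonneg
  exact_mod_cast det_nonneg

theorem norm_apply_lt_one (hK : K ∈ posSemidefKernels 𝕜 X) (hdiag : ∀ x, K x x < 1) (x y : X) :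
    ‖K x y‖ < 1 := by
  have norm_diag_lt (t : X) : ‖K t t‖ < 1 := by
    have := hdiag t
    rw [← RCLike.norm_of_nonneg' (diag_nonneg hK t)] at this
    exact_mod_cast this
  refine (sq_lt_one_iff₀ (norm_nonneg _)).mp ((norm_apply_sq_le hK x y).trans_lt ?_)
  exact mul_lt_one_of_nonneg_of_lt_one_left (norm_nonneg _) (norm_diag_lt x) (norm_diag_lt y).le

theorem inv_one_sub_mem (hK : K ∈ posSemidefKernels 𝕜 X) (hdiag : ∀ x, K x x < 1) :
    (1 - K)⁻¹ ∈ posSemidefKernels 𝕜 X := by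
  have geometric : HasSum (fun k => K ^ k) (1 - K)⁻¹ :=
    Pi.hasSum.mpr fun x => Pi.hasSum.mpr fun y =>
      hasSum_geometric_of_norm_lt_one (norm_apply_lt_one hK hdiag x y)
  exact geometric.tsum_eq ▸ tsum_mem isClosed fun k => pow_mem hK k

theorem sum_mul_conj_mul_nonneg {ι : Type*} [Fintype ι] (hK : K ∈ posSemidefKernels 𝕜 X)
    (x : ι → X) (c : ι → 𝕜) : 0 ≤ ∑ i, ∑ l, c i * conj (c l) * K (x i) (x l) := by
  have := Matrix.PosSemidef.dotProduct_mulVec_nonneg (comp_mem hK x) (star c)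
  simpa [dotProduct, Matrix.mulVec, Finset.mul_sum, mul_assoc, mul_comm, mul_left_comm] using this

end posSemidefKernels

end PosSemidefKernels

section HartogsTriangle

variable {n : ℕ} {P : Fin n → MvPolynomial (Fin n) ℝ}

theorem aeval_uVec_self (z : Fin n → ℂ) (p : MvPolynomial (Fin n) ℝ) :
    MvPolynomial.aeval (uVec z z) p = ((MvPolynomial.eval (fun k => ‖phi z k‖ ^ 2) p : ℝ) : ℂ) := by
  have uVec_self : uVec z z = fun k => ((‖phi z k‖ ^ 2 : ℝ) : ℂ) := by
    ext k
    simp [uVec, Complex.mul_conj']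
  rw [uVec_self]
  simpa only [MvPolynomial.coe_aeval_eq_eval, RingHom.coe_coe, Complex.coe_algebraMap] using!
    MvPolynomial.aeval_algebraMap_apply ℂ (fun k => ‖phi z k‖ ^ 2) p

theorem aeval_uVec_self_lt_one {z : Fin n → ℂ} (hz : z ∈ HartogsTriangle P) (j : Fin n) :
    MvPolynomial.aeval (uVec z z) (P j) < 1 := by
  rw [aeval_uVec_self]
  exact_mod_cast hz.2 j

theorem aeval_uVec_mem_posSemidefKernels {p : MvPolynomial (Fin n) ℝ} (hp : ∀ d, 0 ≤ p.coeff d)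
    (S : Set (Fin n → ℂ)) :
    (fun z w : S => MvPolynomial.aeval (uVec z w) p) ∈ posSemidefKernels ℂ S := by
  have uVec_mem (k : Fin n) : (fun z w : S => uVec z w k) ∈ posSemidefKernels ℂ S := by
    simpa only [uVec] using posSemidefKernels.mul_conj_mem fun z : S => phi z k
  exact posSemidefKernels.aeval_mem hp uVec_mem

theorem aeval_uVec_ne_one {j : Fin n} (hcoeff : ∀ d, 0 ≤ (P j).coeff d) {z w : Fin n → ℂ}
    (hz : z ∈ HartogsTriangle P) (hw : w ∈ HartogsTriangle P) :
    MvPolynomial.aeval (uVec z w) (P j) ≠ 1 := by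
  have norm_lt_one := posSemidefKernels.norm_apply_lt_one
    (aeval_uVec_mem_posSemidefKernels hcoeff (HartogsTriangle P))
    (fun z => aeval_uVec_self_lt_one z.2 j) ⟨z, hz⟩ ⟨w, hw⟩
  exact fun h => norm_lt_one.ne (by simp only [h, norm_one])

theorem inv_prod_mul_conj_mem_posSemidefKernels (s : Finset (Fin n)) (S : Set (Fin n → ℂ)) :
    (fun z w : S => (∏ j ∈ s, z.1 j * conj (w.1 j))⁻¹) ∈ posSemidefKernels ℂ S := by
  simpa only [map_inv₀, map_prod, ← mul_inv, ← Finset.prod_mul_distrib] using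
    posSemidefKernels.mul_conj_mem fun z : S => (∏ j ∈ s, z.1 j)⁻¹

theorem kerPm_mem_posSemidefKernels (hcoeff : ∀ j d, 0 ≤ (P j).coeff d) (m : Fin n → ℕ) :
    (fun z w : HartogsTriangle P => kerPm P m z w) ∈
      posSemidefKernels ℂ (HartogsTriangle P) := by
  have inv_pow_mem (j : Fin n) :
      (fun z w : HartogsTriangle P => ((1 - MvPolynomial.aeval (uVec z w) (P j)) ^ m j)⁻¹) ∈
        posSemidefKernels ℂ (HartogsTriangle P) := by
    simp only [← inv_pow]
    exact pow_mem (posSemidefKernels.inv_one_sub_mem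
      (aeval_uVec_mem_posSemidefKernels (hcoeff j) _) fun z => aeval_uVec_self_lt_one z.2 j) (m j)
  convert mul_mem (inv_prod_mul_conj_mem_posSemidefKernels {j | 1 ≤ (j : ℕ)} _)
    (prod_mem fun j (_ : j ∈ Finset.univ) => inv_pow_mem j) using 1
  ext z w
  simp only [kerPm, Pi.mul_apply, Finset.prod_apply]

end HartogsTriangle

theorem stmt10_general {n : ℕ} {P : Fin n → MvPolynomial (Fin n) ℝ}
    (hcoeff : ∀ j d, 0 ≤ (P j).coeff d) (m : Fin n → ℕ) :
    (∀ z ∈ HartogsTriangle P, ∀ w ∈ HartogsTriangle P, ∀ j : Fin n,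
      MvPolynomial.aeval (uVec z w) (P j) ≠ 1) ∧
    (Matrix.of fun z w : HartogsTriangle P => kerPm P m z w).PosSemidef :=
  ⟨fun _ hz _ hw j => aeval_uVec_ne_one (hcoeff j) hz hw, kerPm_mem_posSemidefKernels hcoeff m⟩

/-- (a) for `z, w ∈ Δⁿ_P`, `P_j^ℂ(u(z,w)) ≠ 1` for each `j`, so the kernel
`K(z,w)` is well defined; (b) `K` is positive semi-definite. -/
theorem stmt10 {n : ℕ} (hn : 2 ≤ n) (P : Fin n → MvPolynomial (Fin n) ℝ)
    (hcoeff : ∀ j d, 0 ≤ (P j).coeff d)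
    (hconst : ∀ j, (P j).coeff 0 = 0)
    (hlin : ∀ j k : Fin n, k ≠ j → (P j).coeff (Finsupp.single k 1) = 0)
    (hdiag : ∀ j : Fin n, 0 < (P j).coeff (Finsupp.single j 1))
    (m : Fin n → ℕ) (hm : ∀ j, 1 ≤ m j) :
    (∀ z ∈ HartogsTriangle P, ∀ w ∈ HartogsTriangle P, ∀ j : Fin n,
      MvPolynomial.aeval (uVec z w) (P j) ≠ 1) ∧
    (∀ N : ℕ, 1 ≤ N → ∀ (zs : Fin N → (Fin n → ℂ)) (c : Fin N → ℂ),
      (∀ i, zs i ∈ HartogsTriangle P) →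
      0 ≤ ∑ i : Fin N, ∑ l : Fin N,
        c i * (starRingEnd ℂ) (c l) * kerPm P m (zs i) (zs l)) := by
  obtain ⟨aeval_ne_one, hK⟩ := stmt10_general hcoeff m
  exact ⟨aeval_ne_one, fun _ _ zs c hzs =>
    posSemidefKernels.sum_mul_conj_mul_nonneg hK (Set.codRestrict zs _ hzs) c⟩
end

section
/- For every n ≥ 1, every m = (m₁,…,mₙ) ∈ ℕⁿ with each m_j ≥ 1, and every α ∈ ℕⁿ, there exists a finite nonnegative Borel measure μ on [0,1]ⁿ such that for every β ∈ ℕⁿ: ∫_{[0,1]ⁿ} ∏_{j=1}^n t_j^{β_j} dμ(t) = ∏_{j=1}^n ( C(α_j + β₁ + ⋯ + β_j + m_j − 1, m_j − 1) )^{−1}, where C(a,b) denotes the binomial coefficient 'a choose b'. That is, the multisequence β ↦ ∏_{j=1}^n C(α_j + Σ_{l=1}^j β_l + m_j − 1, m_j − 1)^{−1} is a Hausdorff moment multisequence. -/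
open MeasureTheory

/-!
If `X₁, …, Xₙ` are independent with values in `[0, 1]` and `a_i` is the moment sequence of `X_i`,
then the monomials `Y_l = ∏ i, X_i ^ A i l` satisfy
`E[∏ l, Y_l ^ β_l] = E[∏ i, X_i ^ (A β)_i] = ∏ i, a_i ((A β)_i)`.
The inverse binomial coefficients `k ↦ C(a + k + q, q)⁻¹` are, for `q ≥ 1`, the moments of a
multiple of the beta distribution with parameters `a + 1` and `q`; for `q = 0` they are the moments
of the unit mass at `1`. The partial sums `β₁ + ⋯ + β_j` correspond to the lower triangular
matrix `A` of ones.
-/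

open ProbabilityTheory

section BetaDistribution

variable {a b : ℝ}

lemma betaPDFReal_nonneg (ha : 0 < a) (hb : 0 < b) (x : ℝ) : 0 ≤ betaPDFReal a b x := by
  by_cases hx : 0 < x ∧ x < 1
  · exact (betaPDFReal_pos hx.1 hx.2 ha hb).le
  · rw [betaPDFReal, if_neg hx]

lemma integral_betaMeasure (ha : 0 < a) (hb : 0 < b) (f : ℝ → ℝ) :
    ∫ x, f x ∂betaMeasure a b = ∫ x, betaPDFReal a b x * f x := by
  have hmeas : Measurable (betaPDF a b) := (measurable_betaPDFReal a b).ennreal_ofReal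
  rw [betaMeasure, integral_withDensity_eq_integral_toReal_smul hmeas (by simp [betaPDF])]
  simp only [betaPDF, ENNReal.toReal_ofReal (betaPDFReal_nonneg ha hb _), smul_eq_mul]

lemma integral_betaPDFReal (ha : 0 < a) (hb : 0 < b) : ∫ x, betaPDFReal a b x = 1 := by
  have := isProbabilityMeasureBeta ha hb
  simpa using (integral_betaMeasure ha hb fun _ => 1).symm

lemma betaPDFReal_mul_pow (ha : 0 < a) (hb : 0 < b) (k : ℕ) (x : ℝ) :
    betaPDFReal a b x * x ^ k = beta (a + k) b / beta a b * betaPDFReal (a + k) b x := by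
  by_cases hx : 0 < x ∧ x < 1
  · have hpow : x ^ (a + k - 1) = x ^ (a - 1) * x ^ k := by
      rw [← Real.rpow_add_natCast hx.1.ne', sub_add_eq_add_sub]
    have hbeta : beta (a + k) b ≠ 0 := (beta_pos (by positivity) hb).ne'
    simp only [betaPDFReal, if_pos hx, hpow]
    field_simp
  · simp only [betaPDFReal, if_neg hx, zero_mul, mul_zero]

lemma integral_pow_betaMeasure (ha : 0 < a) (hb : 0 < b) (k : ℕ) :
    ∫ x, x ^ k ∂betaMeasure a b = beta (a + k) b / beta a b := by
  simp only [integral_betaMeasure ha hb, betaPDFReal_mul_pow ha hb, integral_const_mul,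
    integral_betaPDFReal (add_pos_of_pos_of_nonneg ha k.cast_nonneg) hb, mul_one]

lemma betaMeasure_compl_Icc (a b : ℝ) : betaMeasure a b (Set.Icc 0 1)ᶜ = 0 := by
  rw [betaMeasure, withDensity_apply _ measurableSet_Icc.compl]
  refine setLIntegral_eq_zero measurableSet_Icc.compl fun x hx => ?_
  rw [betaPDF, betaPDFReal, if_neg fun h => hx ⟨h.1.le, h.2.le⟩, ENNReal.ofReal_zero, Pi.zero_apply]

end BetaDistribution

lemma inv_choose_eq_mul_beta (N q : ℕ) :
    ((N + (q + 1)).choose (q + 1) : ℝ)⁻¹ = (q + 1) * beta (N + 1) (q + 1) := by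
  have hsum : (N + 1 + (q + 1) : ℝ) = (N + (q + 1) : ℕ) + 1 := by push_cast; ring
  rw [beta, hsum, Real.Gamma_nat_eq_factorial, Real.Gamma_nat_eq_factorial,
    Real.Gamma_nat_eq_factorial, ← Nat.choose_symm_add, Nat.cast_add_choose, Nat.factorial_succ q,
    inv_div]
  push_cast
  ring

/-- A Hausdorff moment sequence: the sequence of moments `k ↦ ∫ x ^ k` of a finite measure carried
by `[0, 1]`. -/
def IsHausdorffMomentSequence (a : ℕ → ℝ) : Prop :=
  ∃ ν : Measure ℝ, IsFiniteMeasure ν ∧ ν (Set.Icc 0 1)ᶜ = 0 ∧ ∀ k, ∫ x, x ^ k ∂ν = a k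

namespace IsHausdorffMomentSequence

lemma const_mul {a : ℕ → ℝ} {c : ℝ} (hc : 0 ≤ c) (ha : IsHausdorffMomentSequence a) :
    IsHausdorffMomentSequence fun k => c * a k := by
  obtain ⟨ν, hfin, hsupp, hmom⟩ := ha
  refine ⟨ENNReal.ofReal c • ν, ν.smul_finite ENNReal.ofReal_ne_top, ?_, fun k => ?_⟩
  · rw [Measure.smul_apply, hsupp, smul_zero]
  · rw [integral_smul_measure, hmom, ENNReal.toReal_ofReal hc, smul_eq_mul]

lemma one : IsHausdorffMomentSequence fun _ => 1 :=
  ⟨Measure.dirac 1, inferInstance, by simp, fun k => by simp⟩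

lemma beta_add_natCast {a b : ℝ} (ha : 0 < a) (hb : 0 < b) :
    IsHausdorffMomentSequence fun k => beta (a + k) b := by
  have hprob := isProbabilityMeasureBeta ha hb
  have hpos := beta_pos ha hb
  have hmom : IsHausdorffMomentSequence fun k => beta (a + k) b / beta a b :=
    ⟨betaMeasure a b, inferInstance, betaMeasure_compl_Icc a b, integral_pow_betaMeasure ha hb⟩
  simpa only [mul_div_cancel₀ _ hpos.ne'] using hmom.const_mul hpos.le

lemma inv_choose (a q : ℕ) :
    IsHausdorffMomentSequence fun k => ((a + k + q).choose q : ℝ)⁻¹ := by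
  cases q with
  | zero => simpa only [Nat.choose_zero_right, Nat.cast_one, inv_one] using one
  | succ q =>
    have hbeta : IsHausdorffMomentSequence fun k => (q + 1) * beta (a + 1 + k) (q + 1) :=
      (beta_add_natCast (by positivity) (by positivity)).const_mul (by positivity)
    simpa only [inv_choose_eq_mul_beta, Nat.cast_add, add_right_comm] using hbeta

end IsHausdorffMomentSequence

/-- A Hausdorff moment multisequence: the family of mixed moments `β ↦ ∫ ∏ j, t j ^ β j` of a finite
measure carried by the unit cube. The coordinates are indexed by an arbitrary finite type. -/
def IsHausdorffMomentMultisequence {ι : Type*} [Fintype ι] (a : (ι → ℕ) → ℝ) : Prop :=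
  ∃ μ : Measure (ι → ℝ), IsFiniteMeasure μ ∧
    μ (Set.univ.pi fun _ : ι => Set.Icc (0 : ℝ) 1)ᶜ = 0 ∧
    ∀ β : ι → ℕ, ∫ t : ι → ℝ, ∏ j, t j ^ β j ∂μ = a β

section Multisequence

open scoped Matrix

variable {ι κ : Type*} [Fintype ι] [Fintype κ]

lemma prod_prod_pow_pow_eq_prod_pow_mulVec {R : Type*} [CommMonoid R] (A : Matrix ι κ ℕ)
    (s : ι → R) (β : κ → ℕ) :
    ∏ l, (∏ i, s i ^ A i l) ^ β l = ∏ i, s i ^ (A *ᵥ β) i := by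
  simp only [Matrix.mulVec, dotProduct, ← Finset.prod_pow, ← Finset.prod_pow_eq_pow_sum, ← pow_mul]
  exact Finset.prod_comm

lemma IsHausdorffMomentSequence.prod {a : ι → ℕ → ℝ} (ha : ∀ i, IsHausdorffMomentSequence (a i)) :
    IsHausdorffMomentMultisequence fun β : ι → ℕ => ∏ i, a i (β i) := by
  choose ν hfin hsupp hmom using ha
  refine ⟨Measure.pi ν, inferInstance, ?_, fun β => ?_⟩
  · have hcoord : ∀ i, ∀ᵐ s ∂Measure.pi ν, s i ∈ Set.Icc (0 : ℝ) 1 := fun i =>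
      Measure.tendsto_eval_ae_ae.eventually (mem_ae_iff.2 (hsupp i))
    exact mem_ae_iff.1 ((ae_all_iff.2 hcoord).mono fun s hs i _ => hs i)
  · rw [integral_fintype_prod_eq_prod fun i (x : ℝ) => x ^ β i]
    simp only [hmom]

lemma IsHausdorffMomentMultisequence.comp_mulVec {a : (ι → ℕ) → ℝ}
    (ha : IsHausdorffMomentMultisequence a) (A : Matrix ι κ ℕ) :
    IsHausdorffMomentMultisequence fun β : κ → ℕ => a (A *ᵥ β) := by
  obtain ⟨μ, hfin, hsupp, hmom⟩ := ha
  let T : (ι → ℝ) → κ → ℝ := fun s l => ∏ i, s i ^ A i l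
  have hT : Measurable T := by fun_prop
  have hmaps : Set.MapsTo T (Set.univ.pi fun _ => Set.Icc 0 1) (Set.univ.pi fun _ => Set.Icc 0 1) :=
    fun s hs l _ => unitInterval.prod_mem fun i _ =>
      pow_mem (S := unitInterval.submonoid) (hs i trivial) (A i l)
  refine ⟨μ.map T, inferInstance, ?_, fun β => ?_⟩
  · rw [Measure.map_apply hT (MeasurableSet.univ_pi fun _ => measurableSet_Icc).compl]
    exact measure_mono_null (Set.compl_subset_compl.2 hmaps) hsupp
  · rw [integral_map hT.aemeasurable (Continuous.aestronglyMeasurable (by fun_prop))]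
    simp only [T, prod_prod_pow_pow_eq_prod_pow_mulVec, hmom]

lemma of_ite_le_mulVec {R : Type*} [NonAssocSemiring R] [Preorder ι] [LocallyFiniteOrderBot ι]
    [DecidableLE ι] (v : ι → R) (j : ι) :
    ((Matrix.of fun j l => if l ≤ j then 1 else 0) *ᵥ v) j = ∑ l ∈ Finset.Iic j, v l := by
  simp [Matrix.mulVec, dotProduct, ← Finset.sum_filter, Finset.filter_ge_eq_Iic]

theorem stmt17_general (A : Matrix ι κ ℕ) (q α : ι → ℕ) :
    IsHausdorffMomentMultisequence fun β : κ → ℕ =>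
      ∏ i, ((α i + (A *ᵥ β) i + q i).choose (q i) : ℝ)⁻¹ :=
  (IsHausdorffMomentSequence.prod fun i =>
    IsHausdorffMomentSequence.inv_choose (α i) (q i)).comp_mulVec A

end Multisequence

/-- the multisequence
`β ↦ ∏_j C(α_j + β₁+⋯+β_j + m_j − 1, m_j − 1)⁻¹` is a Hausdorff moment multisequence:
there is a finite nonnegative Borel measure on `[0,1]ⁿ` with these moments. -/
theorem stmt17 {n : ℕ} (hn : 1 ≤ n) (m : Fin n → ℕ) (hm : ∀ j, 1 ≤ m j)
    (α : Fin n → ℕ) :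
    ∃ μ : Measure (Fin n → ℝ), IsFiniteMeasure μ ∧
      μ (Set.univ.pi fun _ : Fin n => Set.Icc (0 : ℝ) 1)ᶜ = 0 ∧
      ∀ β : Fin n → ℕ,
        (∫ t : Fin n → ℝ, ∏ j, (t j) ^ (β j) ∂μ) =
          ∏ j, ((Nat.choose (α j + (∑ l ∈ Finset.Iic j, β l) + m j - 1)
            (m j - 1) : ℝ))⁻¹ := by
  simpa only [IsHausdorffMomentMultisequence, of_ite_le_mulVec, Nat.add_sub_assoc (hm _)] using
    stmt17_general (Matrix.of fun j l => if l ≤ j then 1 else 0) (fun j => m j - 1) α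
end

section
/- Let n ≥ 2 and let r₁,…,rₙ be positive real numbers. Let Δ = {z ∈ ℂⁿ : z_j ≠ 0 for j = 2,…,n, |z_j| < r_j·|z_{j+1}| for j = 1,…,n−1, and |zₙ| < rₙ}, and let ψ : ℂⁿ → ℂⁿ be the polynomial map ψ(w) = (w₁w₂⋯wₙ, w₂⋯wₙ, …, w_{n−1}wₙ, wₙ). Then the closure of Δ in ℂⁿ equals the image under ψ of the closed polydisc ∏_{j=1}^n {w ∈ ℂ : |w| ≤ r_j}. -/
/- The map `ψ` is inverted by dividing each coordinate by the next one, where `z_{n+1} = 1` by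
convention. With it the triangle reads `‖z_j‖ < r_j ‖z_{j+1}‖` for all `j`. Since `ψ` maps the
points of the open polydisc with nonzero coordinates, a dense subset, into the triangle,
continuity gives one inclusion. For the other, a limit `z` of points of the triangle satisfies
`‖z_j‖ ≤ r_j ‖z_{j+1}‖`, so `z_{j+1} = 0` forces `z_j = 0`. Hence `w_j = z_j / z_{j+1}`, with
`x / 0 = 0`, still solves `ψ w = z`, and each `w_j` is either `0` or a limit of points of the
disc of radius `r_j`. -/

open Metric Set

theorem closure_pi_ball_zero {ι : Type*} {E : ι → Type*} [∀ i, SeminormedAddCommGroup (E i)]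
    [∀ i, NormedSpace ℝ (E i)] {r : ι → ℝ} (hr : ∀ i, r i ≠ 0) :
    closure (univ.pi fun i => ball (0 : E i) (r i)) = {w | ∀ i, ‖w i‖ ≤ r i} := by
  ext w
  simp only [closure_pi_set, closure_ball _ (hr _), mem_univ_pi, mem_closedBall_zero_iff,
    mem_ofPred_eq]

section TailProd

variable {n : ℕ} {M : Type*}

/-- The coordinate `z_{j+1}` following `z_j`, with the convention `z_{n+1} = 1`, which makes the
last coordinate obey the same formulas as the others. -/
def nextCoord [One M] (z : Fin n → M) (j : Fin n) : M :=
  if h : (j : ℕ) + 1 < n then z ⟨j + 1, h⟩ else 1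

/-- The map `ψ(w) = (w₁w₂⋯wₙ, w₂⋯wₙ, …, wₙ)`. -/
def tailProd [CommMonoid M] (w : Fin n → M) (j : Fin n) : M :=
  ∏ k ∈ Finset.Ici j, w k

/-- The map `φ(z) = (z₁/z₂, …, z_{n-1}/zₙ, zₙ)`, inverse to `tailProd` where no division by zero
occurs. -/
def consecutiveRatio [DivInvMonoid M] (z : Fin n → M) (j : Fin n) : M :=
  z j / nextCoord z j

theorem nextCoord_of_lt [One M] (z : Fin n → M) {j : Fin n} (h : (j : ℕ) + 1 < n) :
    nextCoord z j = z ⟨j + 1, h⟩ :=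
  dif_pos h

theorem nextCoord_of_not_lt [One M] (z : Fin n → M) {j : Fin n} (h : ¬(j : ℕ) + 1 < n) :
    nextCoord z j = 1 :=
  dif_neg h

theorem continuous_nextCoord [One M] [TopologicalSpace M] (j : Fin n) :
    Continuous fun z : Fin n → M => nextCoord z j := by
  unfold nextCoord
  split_ifs <;> fun_prop

theorem continuous_tailProd [CommMonoid M] [TopologicalSpace M] [ContinuousMul M] :
    Continuous (tailProd : (Fin n → M) → Fin n → M) := by
  unfold tailProd
  fun_prop

theorem nextCoord_tailProd [CommMonoid M] (w : Fin n → M) (j : Fin n) :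
    nextCoord (tailProd w) j = ∏ k ∈ Finset.Ioi j, w k := by
  unfold nextCoord tailProd
  split_ifs with h
  · congr 1
    ext k
    simp only [Finset.mem_Ici, Finset.mem_Ioi, Fin.le_def, Fin.lt_def, Nat.succ_le_iff]
  · have hj : Finset.Ioi j = ∅ := by
      ext k
      simp only [Finset.mem_Ioi, Fin.lt_def, Finset.notMem_empty, iff_false]
      omega
    rw [hj, Finset.prod_empty]

theorem tailProd_apply_eq_mul_nextCoord [CommMonoid M] (w : Fin n → M) (j : Fin n) :
    tailProd w j = w j * nextCoord (tailProd w) j := by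
  rw [nextCoord_tailProd, Finset.mul_prod_Ioi_eq_prod_Ici, tailProd]

theorem tailProd_eq_of_forall_mul_nextCoord_eq [CommMonoid M] {w z : Fin n → M}
    (h : ∀ j, w j * nextCoord z j = z j) : tailProd w = z := by
  funext j
  induction j using WellFoundedGT.induction with
  | ind j ih =>
    have hnext : nextCoord (tailProd w) j = nextCoord z j := by
      unfold nextCoord
      split_ifs with hj
      · exact ih _ (Fin.lt_def.mpr (Nat.lt_succ_self j))
      · rfl
    rw [tailProd_apply_eq_mul_nextCoord, hnext, h j]

theorem tailProd_consecutiveRatio [CommGroupWithZero M] {z : Fin n → M}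
    (hz : ∀ j, nextCoord z j = 0 → z j = 0) : tailProd (consecutiveRatio z) = z :=
  tailProd_eq_of_forall_mul_nextCoord_eq fun j => div_mul_cancel_of_imp (hz j)

end TailProd

section HartogsTriangle

variable {n : ℕ} {𝕜 : Type*}

/-- The generalized Hartogs triangle of polyradius `r`. The strict inequalities force `z_j ≠ 0` for
`j ≥ 2`, and by the convention for `nextCoord` the last one reads `‖zₙ‖ < rₙ`. -/
def hartogsTriangle [NormedField 𝕜] (r : Fin n → ℝ) : Set (Fin n → 𝕜) :=
  {z | ∀ j, ‖z j‖ < r j * ‖nextCoord z j‖}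

theorem nextCoord_ne_zero_of_mem_hartogsTriangle [NormedField 𝕜] {r : Fin n → ℝ}
    {z : Fin n → 𝕜} (hz : z ∈ hartogsTriangle r) (j : Fin n) : nextCoord z j ≠ 0 := by
  intro h
  have hj : ‖z j‖ < r j * ‖nextCoord z j‖ := hz j
  rw [h, norm_zero, mul_zero] at hj
  exact (norm_nonneg _).not_gt hj

theorem hartogsTriangle_eq_setOf [NormedField 𝕜] (hn : 0 < n) (r : Fin n → ℝ) :
    hartogsTriangle r = {z : Fin n → 𝕜 |
      (∀ j : Fin n, 1 ≤ (j : ℕ) → z j ≠ 0) ∧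
      (∀ (j : Fin n) (h : (j : ℕ) + 1 < n), ‖z j‖ < r j * ‖z ⟨(j : ℕ) + 1, h⟩‖) ∧
      ‖z ⟨n - 1, by omega⟩‖ < r ⟨n - 1, by omega⟩} := by
  have nextCoord_last (z : Fin n → 𝕜) : nextCoord z ⟨n - 1, by omega⟩ = 1 :=
    nextCoord_of_not_lt z (by simp only; omega)
  ext z
  constructor
  · intro hz
    refine ⟨fun j hj => ?_, fun j h => ?_, ?_⟩
    · have hprev : (j : ℕ) - 1 + 1 < n := by omega
      have hnext := nextCoord_ne_zero_of_mem_hartogsTriangle hz ⟨j - 1, by omega⟩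
      rw [nextCoord_of_lt z hprev] at hnext
      simpa only [Nat.sub_add_cancel hj] using hnext
    · rw [← nextCoord_of_lt z h]
      exact hz j
    · simpa only [nextCoord_last, norm_one, mul_one] using hz ⟨n - 1, by omega⟩
  · rintro ⟨-, hlt, hlast⟩ j
    by_cases h : (j : ℕ) + 1 < n
    · rw [nextCoord_of_lt z h]
      exact hlt j h
    · have hj : j = ⟨n - 1, by omega⟩ := Fin.ext (by simp only; omega)
      simpa only [hj, nextCoord_last, norm_one, mul_one] using hlast

theorem consecutiveRatio_mem_ball [NormedField 𝕜] {r : Fin n → ℝ} {z : Fin n → 𝕜}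
    (hz : z ∈ hartogsTriangle r) (j : Fin n) : consecutiveRatio z j ∈ ball 0 (r j) := by
  have hnext := norm_pos_iff.mpr (nextCoord_ne_zero_of_mem_hartogsTriangle hz j)
  rw [mem_ball_zero_iff, consecutiveRatio, norm_div, div_lt_iff₀ hnext]
  exact hz j

theorem tailProd_mem_hartogsTriangle [NormedField 𝕜] {r : Fin n → ℝ} {w : Fin n → 𝕜}
    (hw : ∀ j, w j ∈ ball 0 (r j)) (hw₀ : ∀ j, w j ≠ 0) :
    tailProd w ∈ hartogsTriangle r := by
  intro j
  have hnext : nextCoord (tailProd w) j ≠ 0 := by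
    rw [nextCoord_tailProd]
    exact Finset.prod_ne_zero_iff.mpr fun k _ => hw₀ k
  rw [tailProd_apply_eq_mul_nextCoord, norm_mul]
  exact mul_lt_mul_of_pos_right (mem_ball_zero_iff.mp (hw j)) (norm_pos_iff.mpr hnext)

theorem eq_zero_of_mem_closure_hartogsTriangle [NormedField 𝕜] {r : Fin n → ℝ}
    {z : Fin n → 𝕜} (hz : z ∈ closure (hartogsTriangle r)) {j : Fin n}
    (hj : nextCoord z j = 0) : z j = 0 := by
  have hle : ‖z j‖ ≤ r j * ‖nextCoord z j‖ :=
    le_on_closure (fun _ hx => (hx j).le) (by fun_prop)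
      (continuous_const.mul (continuous_nextCoord j).norm).continuousOn hz
  rwa [hj, norm_zero, mul_zero, norm_le_zero_iff] at hle

theorem consecutiveRatio_mem_closure_ball [NormedField 𝕜] {r : Fin n → ℝ} {z : Fin n → 𝕜}
    (hz : z ∈ closure (hartogsTriangle r)) (j : Fin n) :
    consecutiveRatio z j ∈ closure (ball 0 (r j)) := by
  by_cases hj : nextCoord z j = 0
  · obtain ⟨x, hx⟩ := closure_nonempty_iff.mp ⟨z, hz⟩
    have hr : 0 < r j := nonempty_ball.mp ⟨_, consecutiveRatio_mem_ball hx j⟩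
    rw [consecutiveRatio, hj, div_zero]
    exact subset_closure (mem_ball_self hr)
  · have hcont : ContinuousAt (fun x : Fin n → 𝕜 => consecutiveRatio x j) z :=
      (continuous_apply j).continuousAt.div (continuous_nextCoord j).continuousAt hj
    exact hcont.continuousWithinAt.mem_closure hz fun x hx => consecutiveRatio_mem_ball hx j

theorem closure_hartogsTriangle_subset [NormedField 𝕜] (r : Fin n → ℝ) :
    closure (hartogsTriangle r) ⊆
      (tailProd : (Fin n → 𝕜) → Fin n → 𝕜) '' closure (univ.pi fun j => ball 0 (r j)) := by
  intro z hz
  refine ⟨consecutiveRatio z, ?_, tailProd_consecutiveRatio fun j =>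
    eq_zero_of_mem_closure_hartogsTriangle hz⟩
  rw [closure_pi_set]
  exact fun j _ => consecutiveRatio_mem_closure_ball hz j

theorem image_tailProd_subset_closure_hartogsTriangle [NontriviallyNormedField 𝕜]
    (r : Fin n → ℝ) :
    (tailProd : (Fin n → 𝕜) → Fin n → 𝕜) '' closure (univ.pi fun j => ball 0 (r j)) ⊆
      closure (hartogsTriangle r) := by
  have hopen : IsOpen (univ.pi fun j => ball (0 : 𝕜) (r j)) :=
    isOpen_set_pi finite_univ fun _ _ => isOpen_ball
  have hdense : Dense (univ.pi fun _ : Fin n => ({0}ᶜ : Set 𝕜)) :=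
    dense_pi univ fun _ _ => dense_compl_singleton 0
  have hmaps : MapsTo tailProd
      ((univ.pi fun j => ball (0 : 𝕜) (r j)) ∩ univ.pi fun _ => {0}ᶜ) (hartogsTriangle r) :=
    fun w hw => tailProd_mem_hartogsTriangle (fun j => hw.1 j trivial) fun j => hw.2 j trivial
  refine image_subset_iff.mpr (Subset.trans ?_ (hmaps.closure continuous_tailProd))
  exact closure_minimal (hdense.open_subset_closure_inter hopen) isClosed_closure

theorem stmt19_general [NontriviallyNormedField 𝕜] (r : Fin n → ℝ) :
    closure (hartogsTriangle r) =
      (tailProd : (Fin n → 𝕜) → Fin n → 𝕜) '' closure (univ.pi fun j => ball 0 (r j)) :=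
  (closure_hartogsTriangle_subset r).antisymm (image_tailProd_subset_closure_hartogsTriangle r)

end HartogsTriangle

/-- for positive radii `r₁,…,rₙ`, the closure of the generalized Hartogs
triangle `Δ = {z : z_j ≠ 0 (j ≥ 2), |z_j| < r_j|z_{j+1}|, |zₙ| < rₙ}` equals the image of
the closed polydisc of polyradius `(r₁,…,rₙ)` under the polynomial map
`ψ(w) = (w₁⋯wₙ, w₂⋯wₙ, …, wₙ)`. -/
theorem stmt19 {n : ℕ} (hn : 2 ≤ n) (r : Fin n → ℝ) (hr : ∀ j, 0 < r j) :
    closure {z : Fin n → ℂ |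
        (∀ j : Fin n, 1 ≤ (j : ℕ) → z j ≠ 0) ∧
        (∀ (j : Fin n) (h : (j : ℕ) + 1 < n), ‖z j‖ < r j * ‖z ⟨(j : ℕ) + 1, h⟩‖) ∧
        ‖z ⟨n - 1, by omega⟩‖ < r ⟨n - 1, by omega⟩} =
      (fun w : Fin n → ℂ => fun j : Fin n => ∏ k ∈ Finset.Ici j, w k) ''
        {w : Fin n → ℂ | ∀ j, ‖w j‖ ≤ r j} := by
  rw [← closure_pi_ball_zero fun j => (hr j).ne', ← hartogsTriangle_eq_setOf (by omega)]
  exact stmt19_general r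
end
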